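/- arXiv:math/9701214 — 5 statements merged into one kernel-verified Lean document; each statement's English description precedes it below -/
import Mathlib

section
/- Let r > 0 and l > 0 be real numbers, and define μ_{k,m} = (k² − 1)/r² + m²π²/l² for integers k ≥ 0, m ≥ 1. There exists an admissible mode (k, m) (i.e. k ≥ 0, m ≥ 1, (k, m) ≠ (0, 1)) with μ_{k,m} ≤ 0 if and only if l ≥ 2πr. (This is the Plateau–Rayleigh criterion: a cylindrical column of radius r becomes unstable exactly when its length reaches π times its diameter.) -/
/-- Plateau–Rayleigh criterion: With
`μ_{k,m} = (k² − 1)/r² + m²π²/l²`, some admissible mode (`k ≥ 0`, `m ≥ 1`,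
`(k, m) ≠ (0, 1)`) has `μ_{k,m} ≤ 0` iff `l ≥ 2πr`. -/
theorem stmt5 (r l : ℝ) (hr : 0 < r) (hl : 0 < l) :
    (∃ k m : ℕ, 1 ≤ m ∧ (k, m) ≠ (0, 1) ∧
        ((k : ℝ) ^ 2 - 1) / r ^ 2 + (m : ℝ) ^ 2 * Real.pi ^ 2 / l ^ 2 ≤ 0)
      ↔ 2 * Real.pi * r ≤ l := by
  have hpi := Real.pi_pos
  have key : ∀ k m : ℕ, (((k : ℝ) ^ 2 - 1) / r ^ 2 + (m : ℝ) ^ 2 * Real.pi ^ 2 / l ^ 2 ≤ 0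
      ↔ ((k : ℝ) ^ 2 - 1) * l ^ 2 + r ^ 2 * ((m : ℝ) ^ 2 * Real.pi ^ 2) ≤ 0) := by
    intro k m
    rw [div_add_div _ _ (by positivity) (by positivity), div_le_iff₀ (by positivity), zero_mul]
  constructor
  · rintro ⟨k, m, hm, hne, h⟩
    rw [key] at h
    have hm1 : (1 : ℝ) ≤ m := by exact_mod_cast hm
    have hpos : 0 < r ^ 2 * ((m : ℝ) ^ 2 * Real.pi ^ 2) := by positivity
    have hk : k = 0 := by
      by_contra hk
      have hk1 : (1 : ℝ) ≤ k := by exact_mod_cast Nat.one_le_iff_ne_zero.mpr hk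
      have : 0 ≤ ((k : ℝ) ^ 2 - 1) * l ^ 2 :=
        mul_nonneg (by nlinarith) (by positivity)
      linarith
    subst hk
    have hm2 : 2 ≤ m := by
      rcases Nat.lt_or_ge m 2 with h2 | h2
      · exact absurd (by rw [show m = 1 by omega]) hne
      · exact h2
    have hm2' : (2 : ℝ) ≤ m := by exact_mod_cast hm2
    have h1 : (m * Real.pi * r) ^ 2 ≤ l ^ 2 := by
      push_cast at h
      nlinarith
    have h2 : m * Real.pi * r ≤ l := le_trans (le_abs_self _) (abs_le_of_sq_le_sq h1 hl.le)
    have h3 : 2 * Real.pi * r ≤ m * Real.pi * r := by gcongr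
    linarith
  · intro h
    refine ⟨0, 2, by norm_num, by simp, ?_⟩
    rw [key]
    have : (2 * Real.pi * r) ^ 2 ≤ l ^ 2 := by gcongr
    push_cast
    nlinarith
end

section
/- Let r > 0, l > 0 and A be real numbers with −1/(3r²) ≤ A < 1/r², and define μ_{k,m} = A + (k² − 1)/r² + m²π²/l² for integers k ≥ 0, m ≥ 1. Then there exists an admissible mode (k, m) (i.e. k ≥ 0, m ≥ 1, (k, m) ≠ (0, 1)) with μ_{k,m} ≤ 0 if and only if l ≥ l_{0,2} = 2π/√(1/r² − A); moreover, when l = l_{0,2} the only admissible mode with nonpositive eigenvalue possible among (0,2) and (1,1) that vanishes is the axially symmetric mode (0, 2) (i.e. μ_{0,2} = 0 and μ_{1,1} ≥ 0 at l = l_{0,2}). Thus for medium-thickness films the instability that sets in first is axially symmetric. -/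
/-- medium films: If `−1/(3r²) ≤ A < 1/r²` then some admissible mode
(`k ≥ 0`, `m ≥ 1`, `(k, m) ≠ (0, 1)`) has `μ_{k,m} ≤ 0` iff `l ≥ l_{0,2}`;
moreover at `l = l_{0,2}` one has `μ_{0,2} = 0` and `μ_{1,1} ≥ 0`, so the
instability that sets in first is axially symmetric. -/
theorem stmt10 (r l A : ℝ) (hr : 0 < r) (hl : 0 < l)
    (hA1 : -(1 / (3 * r ^ 2)) ≤ A) (hA2 : A < 1 / r ^ 2)
    (l02 : ℝ) (hl02 : l02 = 2 * Real.pi / Real.sqrt (1 / r ^ 2 - A)) :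
    ((∃ k m : ℕ, 1 ≤ m ∧ (k, m) ≠ (0, 1) ∧
        A + ((k : ℝ) ^ 2 - 1) / r ^ 2 + (m : ℝ) ^ 2 * Real.pi ^ 2 / l ^ 2 ≤ 0)
      ↔ l02 ≤ l) ∧
    (A - 1 / r ^ 2 + 4 * Real.pi ^ 2 / l02 ^ 2 = 0 ∧
      0 ≤ A + Real.pi ^ 2 / l02 ^ 2) := by
  have hq : 0 < 1 / r ^ 2 := by positivity
  have h3 : 1 / (3 * r ^ 2) = (1 / r ^ 2) / 3 := by field_simp
  rw [h3] at hA1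
  have hdiv : ∀ k : ℝ, (k ^ 2 - 1) / r ^ 2 = (k ^ 2 - 1) * (1 / r ^ 2) := by
    intro k; ring
  simp only [hdiv]
  generalize 1 / r ^ 2 = q at *
  have hD : 0 < q - A := by linarith
  have hpi := Real.pi_pos
  have hs : 0 < Real.sqrt (q - A) := Real.sqrt_pos.mpr hD
  have hsq : l02 ^ 2 = 4 * Real.pi ^ 2 / (q - A) := by
    rw [hl02, div_pow, Real.sq_sqrt hD.le]; ring
  have hB : 0 < Real.pi ^ 2 / l ^ 2 := by positivity
  have hm : ∀ m : ℝ, m ^ 2 * Real.pi ^ 2 / l ^ 2 = m ^ 2 * (Real.pi ^ 2 / l ^ 2) := by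
    intro m; ring
  simp only [hm]
  have h0 : 0 ≤ l02 := by rw [hl02]; positivity
  have key : l02 ≤ l ↔ 4 * (Real.pi ^ 2 / l ^ 2) ≤ q - A := by
    rw [← pow_le_pow_iff_left₀ h0 hl.le two_ne_zero, hsq, div_le_iff₀ hD,
      ← mul_div_assoc, div_le_iff₀ (by positivity), mul_comm (l ^ 2)]
  have hpd : Real.pi ^ 2 / l02 ^ 2 = (q - A) / 4 := by
    rw [hsq]; field_simp
  refine ⟨?_, ?_, ?_⟩
  · rw [key]
    generalize Real.pi ^ 2 / l ^ 2 = B at *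
    constructor
    · rintro ⟨k, m, h1, hne, h⟩
      have hm1 : (1 : ℝ) ≤ m := by exact_mod_cast h1
      rcases Nat.eq_zero_or_pos k with rfl | hk
      · have hm2 : 2 ≤ m := by
          by_contra hlt
          apply hne
          have : m = 1 := by omega
          rw [this]
        have hm2' : (2 : ℝ) ≤ m := by exact_mod_cast hm2
        have : (4 : ℝ) ≤ (m : ℝ) ^ 2 := by nlinarith
        have := mul_le_mul_of_nonneg_right this hB.le
        push_cast at h
        linarith
      · have hk1 : (1 : ℝ) ≤ k := by exact_mod_cast hk
        have e1 : 0 ≤ ((k : ℝ) ^ 2 - 1) * q := mul_nonneg (by nlinarith) hq.le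
        have e2 : (1 : ℝ) ≤ (m : ℝ) ^ 2 := by nlinarith
        have := mul_le_mul_of_nonneg_right e2 hB.le
        linarith
    · intro h
      refine ⟨0, 2, by norm_num, by simp, ?_⟩
      push_cast
      linarith
  · rw [mul_div_assoc, hpd]; ring
  · rw [hpd]; linarith
end

section
/- Let r > 0, l > 0 and A be real numbers with A ≤ −1/(3r²), and define μ_{k,m} = A + (k² − 1)/r² + m²π²/l² for integers k ≥ 0, m ≥ 1. Then there exists an admissible mode (k, m) (i.e. k ≥ 0, m ≥ 1, (k, m) ≠ (0, 1)) with μ_{k,m} ≤ 0 if and only if l ≥ l_{1,1} = π/√(−A). Thus for thick films the instability sets in at length l_{1,1} via the non-axisymmetric mode (1, 1). -/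
/-- thick films: If `A ≤ −1/(3r²)` then some admissible mode
(`k ≥ 0`, `m ≥ 1`, `(k, m) ≠ (0, 1)`) has `μ_{k,m} ≤ 0` iff
`l ≥ l_{1,1} = π/√(−A)`: the instability sets in via the non-axisymmetric
mode `(1, 1)`. -/
theorem stmt11 (r l A : ℝ) (hr : 0 < r) (hl : 0 < l)
    (hA : A ≤ -(1 / (3 * r ^ 2))) :
    (∃ k m : ℕ, 1 ≤ m ∧ (k, m) ≠ (0, 1) ∧
        A + ((k : ℝ) ^ 2 - 1) / r ^ 2 + (m : ℝ) ^ 2 * Real.pi ^ 2 / l ^ 2 ≤ 0)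
      ↔ Real.pi / Real.sqrt (-A) ≤ l := by
  have hR : 0 < 1 / r ^ 2 := by positivity
  have hP : 0 < Real.pi ^ 2 / l ^ 2 := by have := Real.pi_pos; positivity
  have hA' : 1 / r ^ 2 ≤ -3 * A := by
    have : 1 / (3 * r ^ 2) = (1 / r ^ 2) / 3 := by field_simp
    linarith
  have hneg : 0 < -A := by linarith
  have key : Real.pi / Real.sqrt (-A) ≤ l ↔ Real.pi ^ 2 / l ^ 2 ≤ -A := by
    rw [div_le_iff₀ (Real.sqrt_pos.mpr hneg), ← div_le_iff₀' hl,
      Real.le_sqrt' (by have := Real.pi_pos; positivity), div_pow]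
  rw [key]
  constructor
  · rintro ⟨k, m, hm, hne, h⟩
    rw [mul_div_assoc, div_eq_mul_one_div ((k : ℝ) ^ 2 - 1)] at h
    rcases Nat.eq_zero_or_pos k with rfl | hk
    · have hm2 : 2 ≤ m := by
        rcases Nat.lt_or_ge m 2 with h' | h'
        · exact absurd (by rw [show m = 1 by omega]) hne
        · exact h'
      have hm' : (2 : ℝ) ≤ m := by exact_mod_cast hm2
      have : (4 : ℝ) * (Real.pi ^ 2 / l ^ 2) ≤ (m : ℝ) ^ 2 * (Real.pi ^ 2 / l ^ 2) :=
        mul_le_mul_of_nonneg_right (by nlinarith) hP.le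
      push_cast at h
      linarith
    · have hm' : (1 : ℝ) ≤ m := by exact_mod_cast hm
      have hk' : (1 : ℝ) ≤ k := by exact_mod_cast hk
      have h1 : (1 : ℝ) * (Real.pi ^ 2 / l ^ 2) ≤ (m : ℝ) ^ 2 * (Real.pi ^ 2 / l ^ 2) :=
        mul_le_mul_of_nonneg_right (by nlinarith) hP.le
      have h2 : 0 ≤ ((k : ℝ) ^ 2 - 1) * (1 / r ^ 2) :=
        mul_nonneg (by nlinarith) hR.le
      linarith
  · intro h
    refine ⟨1, 1, le_rfl, by simp, ?_⟩
    norm_num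
    linarith
end

section
/- Let α > 0 and r₀ > 0 be real numbers, and define r_c = r₀ + √(3α)/2 + (1/2)·√(4r₀√(3α) + 3α). Then r_c > r₀ and r_c satisfies the equation 3α/(r_c − r₀)⁴ = 1/r_c². -/
/-- For `α > 0`, `r₀ > 0`, the radius
`r_c = r₀ + √(3α)/2 + (1/2)·√(4r₀√(3α) + 3α)` satisfies `r_c > r₀` and
`3α/(r_c − r₀)⁴ = 1/r_c²`. -/
theorem stmt12 (α r₀ : ℝ) (hα : 0 < α) (hr₀ : 0 < r₀) (rc : ℝ)
    (hrc : rc = r₀ + Real.sqrt (3 * α) / 2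
        + (1 / 2) * Real.sqrt (4 * r₀ * Real.sqrt (3 * α) + 3 * α)) :
    r₀ < rc ∧ 3 * α / (rc - r₀) ^ 4 = 1 / rc ^ 2 := by
  have hs : 0 < Real.sqrt (3 * α) := Real.sqrt_pos.mpr (by linarith)
  have hs2 : Real.sqrt (3 * α) ^ 2 = 3 * α := Real.sq_sqrt (by linarith)
  have ht : 0 ≤ Real.sqrt (4 * r₀ * Real.sqrt (3 * α) + 3 * α) := Real.sqrt_nonneg _
  have ht2 : Real.sqrt (4 * r₀ * Real.sqrt (3 * α) + 3 * α) ^ 2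
      = 4 * r₀ * Real.sqrt (3 * α) + 3 * α := Real.sq_sqrt (by positivity)
  generalize Real.sqrt (4 * r₀ * Real.sqrt (3 * α) + 3 * α) = t at *
  generalize Real.sqrt (3 * α) = s at *
  have hlt : r₀ < rc := by linarith
  have hx : (rc - r₀) ^ 2 = s * rc := by
    rw [hrc]; linear_combination (1 / 4) * ht2 - (1 / 4) * hs2
  have hrp : 0 < rc := by linarith
  refine ⟨hlt, ?_⟩
  have h4 : (rc - r₀) ^ 4 = s ^ 2 * rc ^ 2 := by
    rw [← mul_pow, ← hx]; ring
  rw [h4, ← hs2]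
  field_simp
end

section
/- Let α > 0 and r₀ > 0 be real numbers. The equation 3α/(r − r₀)⁴ = 1/r² has exactly one solution r in the interval (r₀, ∞), namely r = r₀ + √(3α)/2 + (1/2)·√(4r₀√(3α) + 3α). -/
/-- For `α > 0`, `r₀ > 0`, the equation `3α/(r − r₀)⁴ = 1/r²` has
exactly one solution `r ∈ (r₀, ∞)`, namely
`r = r₀ + √(3α)/2 + (1/2)·√(4r₀√(3α) + 3α)`. -/
theorem stmt13 (α r₀ : ℝ) (hα : 0 < α) (hr₀ : 0 < r₀) :
    ∀ r : ℝ, (r₀ < r ∧ 3 * α / (r - r₀) ^ 4 = 1 / r ^ 2)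
      ↔ r = r₀ + Real.sqrt (3 * α) / 2
          + (1 / 2) * Real.sqrt (4 * r₀ * Real.sqrt (3 * α) + 3 * α) := by
  intro r
  have hs : 0 < Real.sqrt (3 * α) := Real.sqrt_pos.mpr (by positivity)
  have hs2 : Real.sqrt (3 * α) ^ 2 = 3 * α := Real.sq_sqrt (by positivity)
  generalize Real.sqrt (3 * α) = s at *
  have ht : 0 < Real.sqrt (4 * r₀ * s + 3 * α) := Real.sqrt_pos.mpr (by positivity)
  have ht2 : Real.sqrt (4 * r₀ * s + 3 * α) ^ 2 = 4 * r₀ * s + 3 * α :=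
    Real.sq_sqrt (by positivity)
  generalize Real.sqrt (4 * r₀ * s + 3 * α) = t at *
  rw [← hs2] at ht2 ⊢
  have hst : s < t := by
    have : 0 < r₀ * s := mul_pos hr₀ hs
    exact lt_of_pow_lt_pow_left₀ 2 ht.le (by linarith)
  constructor
  · rintro ⟨hr, he⟩
    have hd : 0 < r - r₀ := by linarith
    have hr' : 0 < r := by linarith
    rw [div_eq_div_iff (by positivity) (by positivity)] at he
    have h1 : (s * r) ^ 2 = ((r - r₀) ^ 2) ^ 2 := by linear_combination he
    have h2 : s * r = (r - r₀) ^ 2 :=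
      (pow_left_inj₀ (by positivity) (by positivity) two_ne_zero).mp h1
    have h3 : (2 * (r - r₀) - s - t) * (2 * (r - r₀) - s + t) = 0 := by
      linear_combination -4 * h2 - ht2
    rcases mul_eq_zero.mp h3 with h | h
    · linarith
    · linarith
  · intro h
    have hr : r₀ < r := by linarith
    have hd : 0 < r - r₀ := by linarith
    have hr' : 0 < r := by linarith
    refine ⟨hr, ?_⟩
    rw [div_eq_div_iff (by positivity) (by positivity)]
    have h2 : s * r = (r - r₀) ^ 2 := by
      subst h
      linear_combination (-1 / 4) * ht2
    linear_combination (s * r + (r - r₀) ^ 2) * h2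
end
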